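/- arXiv:0704.1975 — 6 statements merged into one kernel-verified Lean document; each statement's English description precedes it below -/
import Mathlib

section
/- Let (X, μ) be a finite measure space and, for each t ∈ [0,∞), let f(·;t) : X → [0,∞) be an integrable function; set F(t) = ∫_X f(x;t) dμ(x). Assume that for every x ∈ X the function t ↦ f(x;t) is nondecreasing, and that F(t) → ∞ as t → ∞. Let ε > 0 be arbitrary. Then for μ-almost every x ∈ X there exists T = T(x,ε) > 0 such that for all t > T one has f(x;t) ≤ F(t) · (1 + log(1 + F(t)))^{1+ε}. -/
open MeasureTheory

theorem cofinal_seq_aux (A : Set ℝ) (hne : A.Nonempty) (hb : BddAbove A) :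
    ∃ u : ℕ → ℝ, Monotone u ∧ (∀ n, u n ∈ A) ∧ ∀ t ∈ A, ∃ n, t ≤ u n := by
  by_cases hm : sSup A ∈ A
  · exact ⟨fun _ => sSup A, monotone_const, fun _ => hm, fun t ht => ⟨0, le_csSup hb ht⟩⟩
  · obtain ⟨u, hu, -, hlim, hmem⟩ := (isLUB_csSup hne hb).exists_seq_monotone_tendsto hne
    refine ⟨u, hu, hmem, fun t ht => ?_⟩
    have hlt : t < sSup A := lt_of_le_of_ne (le_csSup hb ht) (fun h => hm (h ▸ ht))
    obtain ⟨n, hn⟩ := (hlim.eventually (lt_mem_nhds hlt)).exists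
    exact ⟨n, hn.le⟩

/-- For a family of nonnegative integrable functions `f (·; t)` on a finite measure space,
nondecreasing in `t` for each fixed `x`, whose averages `F t = ∫ f(x;t) dμ(x)` tend to
infinity, for every `ε > 0` and almost every `x` there is `T > 0` with
`f(x;t) ≤ F(t) (1 + log(1 + F(t)))^(1+ε)` for all `t > T`. -/
theorem log_bound_cont {X : Type*} [MeasurableSpace X] (μ : Measure X) [IsFiniteMeasure μ]
    (f : ℝ → X → ℝ) (F : ℝ → ℝ)
    (hf_nonneg : ∀ t : ℝ, 0 ≤ t → ∀ x : X, 0 ≤ f t x)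
    (hf_int : ∀ t : ℝ, 0 ≤ t → Integrable (f t) μ)
    (hF : ∀ t : ℝ, 0 ≤ t → F t = ∫ x, f t x ∂μ)
    (hf_mono : ∀ x : X, ∀ s t : ℝ, 0 ≤ s → s ≤ t → f s x ≤ f t x)
    (hF_top : Filter.Tendsto F Filter.atTop Filter.atTop)
    (ε : ℝ) (hε : 0 < ε) :
    ∀ᵐ x ∂μ, ∃ T : ℝ, 0 < T ∧ ∀ t : ℝ, T < t →
      f t x ≤ F t * (1 + Real.log (1 + F t)) ^ (1 + ε) := by
  set A : ℕ → Set ℝ := fun n => {t | 0 ≤ t ∧ Real.exp n ≤ F t ∧ F t < Real.exp (n + 1)} with hA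
  set c : ℕ → ℝ := fun n => Real.exp n * ((n : ℝ) + 1) ^ (1 + ε) with hc
  have hcpos : ∀ n, 0 < c n := fun n => by positivity
  set B : ℕ → Set X := fun n => ⋃ t ∈ A n, {x | c n ≤ f t x} with hB
  have hbound : ∀ n, μ (B n) ≤ ENNReal.ofReal (Real.exp 1 * (1 / ((n : ℝ) + 1) ^ (1 + ε))) := by
    intro n
    by_cases hne : (A n).Nonempty
    · have hb : BddAbove (A n) := by
        obtain ⟨M, hM⟩ := Filter.eventually_atTop.1
          (hF_top.eventually_ge_atTop (Real.exp (n + 1)))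
        refine ⟨M, fun t ht => ?_⟩
        by_contra h
        exact absurd (hM t (not_le.1 h).le) (not_le.2 ht.2.2)
      obtain ⟨u, hu, huA, hcof⟩ := cofinal_seq_aux (A n) hne hb
      have hsub : B n ⊆ ⋃ k, {x | c n ≤ f (u k) x} := by
        intro x hx
        simp only [hB, Set.mem_iUnion, Set.mem_setOf_eq] at hx ⊢
        obtain ⟨t, ht, hx⟩ := hx
        obtain ⟨k, hk⟩ := hcof t ht
        exact ⟨k, hx.trans (hf_mono x t (u k) ht.1 hk)⟩
      refine (measure_mono hsub).trans ?_
      have hmon : Monotone (fun k => {x | c n ≤ f (u k) x}) := by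
        intro i j hij x hx
        exact le_trans hx (hf_mono x _ _ (huA i).1 (hu hij))
      rw [hmon.measure_iUnion]
      refine iSup_le fun k => ?_
      have h0 := (huA k).1
      have hmk := mul_meas_ge_le_integral_of_nonneg
        (Filter.Eventually.of_forall (hf_nonneg (u k) h0)) (hf_int (u k) h0) (c n)
      rw [← hF _ h0] at hmk
      rw [← ofReal_measureReal (μ := μ)]
      apply ENNReal.ofReal_le_ofReal
      have h2 : c n * μ.real {x | c n ≤ f (u k) x} ≤ Real.exp (n + 1) :=
        hmk.trans (huA k).2.2.le
      have h3 : Real.exp 1 * (1 / ((n : ℝ) + 1) ^ (1 + ε)) = Real.exp (n + 1) / c n := by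
        have : 0 < ((n : ℝ) + 1) ^ (1 + ε) := by positivity
        simp only [hc, Real.exp_add]
        field_simp
      rw [h3, le_div_iff₀ (hcpos n), mul_comm]
      exact h2
    · have : B n = ∅ := by
        simp [hB, Set.not_nonempty_iff_eq_empty.1 hne]
      simp [this]
  have hsum : Summable (fun n : ℕ => Real.exp 1 * (1 / ((n : ℝ) + 1) ^ (1 + ε))) := by
    apply Summable.mul_left
    have := (summable_nat_add_iff 1).2 (Real.summable_one_div_nat_rpow.2 (by linarith : 1 < 1 + ε))
    simpa using this
  have hfin : ∑' n, μ (B n) ≠ ⊤ :=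
    ne_top_of_le_ne_top hsum.tsum_ofReal_ne_top (ENNReal.tsum_le_tsum hbound)
  filter_upwards [ae_eventually_notMem hfin] with x hx
  obtain ⟨N, hN⟩ := Filter.eventually_atTop.1 hx
  obtain ⟨M, hM⟩ := Filter.eventually_atTop.1 (hF_top.eventually_ge_atTop (Real.exp N))
  refine ⟨max M 1, by positivity, fun t ht => ?_⟩
  have htM : M ≤ t := (le_max_left _ _).trans ht.le
  have ht0 : 0 ≤ t := zero_le_one.trans ((le_max_right _ _).trans ht.le)
  have hFt := hM t htM
  have hFpos : 0 < F t := (Real.exp_pos _).trans_le hFt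
  have hlogN : (N : ℝ) ≤ Real.log (F t) := (Real.le_log_iff_exp_le hFpos).2 hFt
  have hlog0 : 0 ≤ Real.log (F t) := (Nat.cast_nonneg N).trans hlogN
  set n := ⌊Real.log (F t)⌋₊ with hn
  have hn1 : (n : ℝ) ≤ Real.log (F t) := Nat.floor_le hlog0
  have hn2 : Real.log (F t) < n + 1 := Nat.lt_floor_add_one _
  have hnN : N ≤ n := Nat.le_floor hlogN
  have hexp : Real.exp n ≤ F t := (Real.le_log_iff_exp_le hFpos).1 hn1
  have htA : t ∈ A n := ⟨ht0, hexp, (Real.log_lt_iff_lt_exp hFpos).1 hn2⟩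
  have hlt : f t x < c n := by
    by_contra h
    exact hN n hnN (Set.mem_biUnion htA (not_lt.1 h))
  refine hlt.le.trans ?_
  have hl : Real.log (F t) ≤ Real.log (1 + F t) := Real.log_le_log hFpos (by linarith)
  exact mul_le_mul hexp (Real.rpow_le_rpow (by positivity) (by linarith) (by linarith))
    (by positivity) hFpos.le
end

section
/- Let (X, μ) be a finite measure space and, for each t ∈ [0,∞), let f(·;t) : X → [0,∞) be an integrable function; set F(t) = ∫_X f(x;t) dμ(x). Assume that for every x ∈ X the function t ↦ f(x;t) is nondecreasing, and that F(t) → ∞ as t → ∞. Let p > 0 and suppose F(t) = O(t^p) as t → ∞. Then for every ε > 0 and μ-almost every x ∈ X one has f(x;t) = O(t^{p+ε}) as t → ∞. -/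
open MeasureTheory Filter Asymptotics

/-- If the averages satisfy `F(t) = O(t^p)` with `p > 0`, the functions are nondecreasing in
time and `F(t) → ∞`, then for every `ε > 0` and almost every `x` one has
`f(x;t) = O(t^(p+ε))` as `t → ∞`. -/
theorem power_bound_cont {X : Type*} [MeasurableSpace X] (μ : Measure X) [IsFiniteMeasure μ]
    (f : ℝ → X → ℝ) (F : ℝ → ℝ)
    (hf_nonneg : ∀ t : ℝ, 0 ≤ t → ∀ x : X, 0 ≤ f t x)
    (hf_int : ∀ t : ℝ, 0 ≤ t → Integrable (f t) μ)
    (hF : ∀ t : ℝ, 0 ≤ t → F t = ∫ x, f t x ∂μ)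
    (hf_mono : ∀ x : X, ∀ s t : ℝ, 0 ≤ s → s ≤ t → f s x ≤ f t x)
    (hF_top : Tendsto F atTop atTop)
    (p : ℝ) (hp : 0 < p) (hF_O : F =O[atTop] fun t : ℝ => t ^ p) :
    ∀ ε : ℝ, 0 < ε →
      ∀ᵐ x ∂μ, (fun t : ℝ => f t x) =O[atTop] fun t : ℝ => t ^ (p + ε) := by
  intro ε hε
  obtain ⟨C, hC, hb⟩ := hF_O.exists_pos
  rw [IsBigOWith] at hb
  obtain ⟨T₀, hT₀⟩ := eventually_atTop.1 hb
  obtain ⟨T, hT1, hT⟩ : ∃ T : ℝ, 1 ≤ T ∧ ∀ t, T ≤ t → F t ≤ C * t ^ p := by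
    refine ⟨max 1 T₀, le_max_left _ _, fun t ht => ?_⟩
    have h1 : 1 ≤ t := (le_max_left _ _).trans ht
    have h2 := hT₀ t ((le_max_right _ _).trans ht)
    rw [Real.norm_of_nonneg (Real.rpow_nonneg (by linarith) p)] at h2
    exact (le_abs_self _).trans h2
  have hT0 : 0 < T := by linarith
  set τ : ℕ → ℝ := fun n => T * 2 ^ n with hτ
  have hτpos : ∀ n, 0 < τ n := fun n => by positivity
  have hτT : ∀ n, T ≤ τ n := fun n =>
    le_mul_of_one_le_right hT0.le (one_le_pow₀ (by norm_num))
  set g : ℕ → X → ℝ := fun n x => f (τ n) x / (τ n) ^ (p + ε) with hg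
  have hg_nonneg : ∀ n x, 0 ≤ g n x := fun n x =>
    div_nonneg (hf_nonneg _ (hτpos n).le x) (Real.rpow_nonneg (hτpos n).le _)
  have hg_int : ∀ n, Integrable (g n) μ := fun n => (hf_int _ (hτpos n).le).div_const _
  have hr1 : (2 : ℝ) ^ (-ε) < 1 := Real.rpow_lt_one_of_one_lt_of_neg (by norm_num) (by linarith)
  have hr0 : 0 ≤ (2 : ℝ) ^ (-ε) := Real.rpow_nonneg (by norm_num) _
  have hI : ∀ n, ∫ x, g n x ∂μ ≤ (C * T ^ (-ε)) * ((2 : ℝ) ^ (-ε)) ^ n := by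
    intro n
    have h1 : ∫ x, g n x ∂μ = F (τ n) / (τ n) ^ (p + ε) := by
      rw [hF _ (hτpos n).le]
      exact integral_div _ _
    have h2 : (T * 2 ^ n) ^ (-ε) = T ^ (-ε) * ((2 : ℝ) ^ (-ε)) ^ n := by
      rw [Real.mul_rpow hT0.le (by positivity), ← Real.rpow_natCast, ← Real.rpow_natCast,
        ← Real.rpow_mul (by norm_num), ← Real.rpow_mul (by norm_num), mul_comm (n : ℝ)]
    rw [h1, mul_assoc, ← h2, div_le_iff₀ (Real.rpow_pos_of_pos (hτpos n) _)]
    change F (τ n) ≤ C * (τ n) ^ (-ε) * (τ n) ^ (p + ε)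
    rw [mul_assoc, ← Real.rpow_add (hτpos n)]
    have : -ε + (p + ε) = p := by ring
    rw [this]
    exact hT _ (hτT n)
  have hsum : Summable fun n => ∫ x, g n x ∂μ :=
    Summable.of_nonneg_of_le (fun n => integral_nonneg (hg_nonneg n)) hI
      ((summable_geometric_of_lt_one hr0 hr1).mul_left _)
  have hmeas : ∀ n, AEMeasurable (fun x => ENNReal.ofReal (g n x)) μ := fun n =>
    (hg_int n).aestronglyMeasurable.aemeasurable.ennreal_ofReal
  have hfin : ∫⁻ x, ∑' n, ENNReal.ofReal (g n x) ∂μ ≠ ⊤ := by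
    rw [lintegral_tsum hmeas]
    have : ∀ n, ∫⁻ x, ENNReal.ofReal (g n x) ∂μ = ENNReal.ofReal (∫ x, g n x ∂μ) := fun n =>
      (ofReal_integral_eq_lintegral_ofReal (hg_int n) (ae_of_all _ (hg_nonneg n))).symm
    simp_rw [this]
    exact hsum.tsum_ofReal_ne_top
  filter_upwards [ae_lt_top' (AEMeasurable.tsum hmeas) hfin] with x hx
  set B : ℝ := (∑' n, ENNReal.ofReal (g n x)).toReal with hB
  have hgB : ∀ n, g n x ≤ B := fun n =>
    (ENNReal.ofReal_le_iff_le_toReal hx.ne).1 (ENNReal.le_tsum n)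
  have hB0 : 0 ≤ B := ENNReal.toReal_nonneg
  refine IsBigO.of_bound (B * 2 ^ (p + ε)) (eventually_atTop.2 ⟨T, fun t ht => ?_⟩)
  have ht0 : 0 < t := by linarith
  obtain ⟨n, hn1, hn2⟩ := exists_nat_pow_near ((one_le_div hT0).2 ht) (one_lt_two (α := ℝ))
  rw [le_div_iff₀ hT0] at hn1
  rw [div_lt_iff₀ hT0] at hn2
  rw [Real.norm_of_nonneg (hf_nonneg t ht0.le x), Real.norm_of_nonneg (Real.rpow_nonneg ht0.le _)]
  have h1 : f t x ≤ f (τ (n + 1)) x := hf_mono x _ _ ht0.le (by simp only [hτ]; linarith)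
  have h2 := (div_le_iff₀ (Real.rpow_pos_of_pos (hτpos (n + 1)) (p + ε))).1 (hgB (n + 1))
  have h3 : τ (n + 1) ≤ 2 * t := by simp only [hτ, pow_succ]; linarith
  have h4 : (τ (n + 1)) ^ (p + ε) ≤ 2 ^ (p + ε) * t ^ (p + ε) := by
    rw [← Real.mul_rpow (by norm_num) ht0.le]
    exact Real.rpow_le_rpow (hτpos _).le h3 (by linarith)
  calc f t x ≤ B * (τ (n + 1)) ^ (p + ε) := h1.trans h2
    _ ≤ B * (2 ^ (p + ε) * t ^ (p + ε)) := mul_le_mul_of_nonneg_left h4 hB0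
    _ = _ := by ring
end

section
/- Let (X, μ) be a finite measure space and, for each t ∈ [0,∞), let f(·;t) : X → [0,∞) be an integrable function; set F(t) = ∫_X f(x;t) dμ(x). Assume that for every x ∈ X the function t ↦ f(x;t) is nondecreasing, and that F(t) → ∞ as t → ∞. Let a > 0 and suppose F(t) = O(e^{at}) as t → ∞. Then for every ε > 0 and μ-almost every x ∈ X one has f(x;t) = O(e^{(a+ε)t}) as t → ∞. -/
open MeasureTheory Filter Asymptotics

/-- If the averages satisfy `F(t) = O(e^(a t))` with `a > 0`, the functions are nondecreasing
in time and `F(t) → ∞`, then for every `ε > 0` and almost every `x` one has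
`f(x;t) = O(e^((a+ε) t))` as `t → ∞`. -/
theorem exp_bound_cont {X : Type*} [MeasurableSpace X] (μ : Measure X) [IsFiniteMeasure μ]
    (f : ℝ → X → ℝ) (F : ℝ → ℝ)
    (hf_nonneg : ∀ t : ℝ, 0 ≤ t → ∀ x : X, 0 ≤ f t x)
    (hf_int : ∀ t : ℝ, 0 ≤ t → Integrable (f t) μ)
    (hF : ∀ t : ℝ, 0 ≤ t → F t = ∫ x, f t x ∂μ)
    (hf_mono : ∀ x : X, ∀ s t : ℝ, 0 ≤ s → s ≤ t → f s x ≤ f t x)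
    (hF_top : Tendsto F atTop atTop)
    (a : ℝ) (ha : 0 < a) (hF_O : F =O[atTop] fun t : ℝ => Real.exp (a * t)) :
    ∀ ε : ℝ, 0 < ε →
      ∀ᵐ x ∂μ, (fun t : ℝ => f t x) =O[atTop] fun t : ℝ => Real.exp ((a + ε) * t) := by
  intro ε hε
  set g : ℕ → X → ℝ := fun n x => f n x * Real.exp (-((a + ε) * n)) with hg
  have hg_int : ∀ n, Integrable (g n) μ := fun n => (hf_int n n.cast_nonneg).mul_const _
  have hg_nn : ∀ n x, 0 ≤ g n x := fun n x =>
    mul_nonneg (hf_nonneg n n.cast_nonneg x) (Real.exp_pos _).le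
  have hI : ∀ n : ℕ, ∫ x, g n x ∂μ = F n * Real.exp (-((a + ε) * n)) := by
    intro n
    rw [hF n n.cast_nonneg, ← integral_mul_const]
  have hsum : Summable (fun n : ℕ => ∫ x, g n x ∂μ) := by
    have h1 : Summable (fun n : ℕ => Real.exp (n * (-ε))) :=
      Real.summable_exp_nat_mul_iff.2 (by linarith)
    refine summable_of_isBigO_nat h1 ?_
    have h2 := (hF_O.comp_tendsto (tendsto_natCast_atTop_atTop (R := ℝ))).mul
      (isBigO_refl (fun n : ℕ => Real.exp (-((a + ε) * n))) atTop)
    refine (h2.congr (fun n => (hI n).symm) (fun n => ?_))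
    simp only [Function.comp]
    rw [← Real.exp_add]
    congr 1
    ring
  have hfin : ∫⁻ x, ∑' n, ENNReal.ofReal (g n x) ∂μ ≠ ⊤ := by
    rw [lintegral_tsum (fun n => (hg_int n).aemeasurable.ennreal_ofReal)]
    have : ∀ n, ∫⁻ x, ENNReal.ofReal (g n x) ∂μ = ENNReal.ofReal (∫ x, g n x ∂μ) := fun n =>
      (ofReal_integral_eq_lintegral_ofReal (hg_int n) (Eventually.of_forall (hg_nn n))).symm
    simp_rw [this]
    exact hsum.tsum_ofReal_ne_top
  have hae := ae_lt_top' (AEMeasurable.tsum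
    (fun n => (hg_int n).aemeasurable.ennreal_ofReal)) hfin
  filter_upwards [hae] with x hx
  set S := (∑' n, ENNReal.ofReal (g n x)).toReal with hS
  have hb : ∀ n, g n x ≤ S := fun n =>
    (ENNReal.ofReal_le_iff_le_toReal hx.ne).1 (ENNReal.le_tsum n)
  have hS0 : 0 ≤ S := ENNReal.toReal_nonneg
  refine IsBigO.of_bound (S * Real.exp (a + ε)) ?_
  filter_upwards [eventually_ge_atTop (0 : ℝ)] with t ht
  rw [Real.norm_of_nonneg (hf_nonneg t ht x), Real.norm_of_nonneg (Real.exp_pos _).le]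
  have h1 := hf_mono x t _ ht (Nat.le_ceil t)
  have h2 := hb ⌈t⌉₊
  have h3 : f (⌈t⌉₊ : ℝ) x ≤ S * Real.exp ((a + ε) * (⌈t⌉₊ : ℝ)) := by
    simp only [hg, Real.exp_neg] at h2
    rwa [← div_eq_mul_inv, div_le_iff₀ (Real.exp_pos _)] at h2
  have h4 : (⌈t⌉₊ : ℝ) ≤ t + 1 := (Nat.ceil_lt_add_one ht).le
  calc f t x ≤ S * Real.exp ((a + ε) * (⌈t⌉₊ : ℝ)) := h1.trans h3
    _ ≤ S * Real.exp ((a + ε) * (t + 1)) := by gcongr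
    _ = _ := by
      rw [mul_assoc, ← Real.exp_add]
      congr 2
      ring
end

section
/- Let (X, μ) be a finite measure space and, for each n ∈ ℕ, let f(·;n) : X → [0,∞) be an integrable function such that for every x ∈ X the numerical sequence n ↦ f(x;n) is nondecreasing; set F(n) = ∫_X f(x;n) dμ(x). Let p > 0 and suppose F(n) = O(n^p) as n → ∞. Then for every ε > 0 and μ-almost every x ∈ X one has f(x;n) = O(n^{p+ε}) as n → ∞. -/
open MeasureTheory Filter Asymptotics

/-- Discrete-time version: if the averages satisfy `F(n) = O(n^p)` with `p > 0` and the
sequences `n ↦ f(x;n)` are nondecreasing, then for every `ε > 0` and almost every `x` one has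
`f(x;n) = O(n^(p+ε))` as `n → ∞`. -/
theorem power_bound_disc {X : Type*} [MeasurableSpace X] (μ : Measure X) [IsFiniteMeasure μ]
    (f : ℕ → X → ℝ) (F : ℕ → ℝ)
    (hf_nonneg : ∀ n : ℕ, ∀ x : X, 0 ≤ f n x)
    (hf_int : ∀ n : ℕ, Integrable (f n) μ)
    (hF : ∀ n : ℕ, F n = ∫ x, f n x ∂μ)
    (hf_mono : ∀ x : X, Monotone fun n : ℕ => f n x)
    (p : ℝ) (hp : 0 < p) (hF_O : F =O[atTop] fun n : ℕ => (n : ℝ) ^ p) :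
    ∀ ε : ℝ, 0 < ε →
      ∀ᵐ x ∂μ, (fun n : ℕ => f n x) =O[atTop] fun n : ℕ => (n : ℝ) ^ (p + ε) := by
  intro ε hε
  have hpos : ∀ k : ℕ, (0 : ℝ) < ((2 ^ k : ℕ) : ℝ) := fun k => by positivity
  set w : ℕ → ℝ := fun k => (((2 ^ k : ℕ) : ℝ) ^ (p + ε)) with hw
  have hwpos : ∀ k, 0 < w k := fun k => Real.rpow_pos_of_pos (hpos k) _
  have hsum : Summable fun k : ℕ => F (2 ^ k) / w k := by
    have hg : Summable fun k : ℕ => ((2 : ℝ) ^ (-ε)) ^ k := by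
      apply summable_geometric_of_lt_one (by positivity)
      exact Real.rpow_lt_one_of_one_lt_of_neg (by norm_num) (by linarith)
    refine summable_of_isBigO_nat hg ?_
    have ht : Tendsto (fun k : ℕ => 2 ^ k) atTop (atTop : Filter ℕ) :=
      tendsto_pow_atTop_atTop_of_one_lt (by norm_num)
    have h1 := hF_O.comp_tendsto ht
    have h2 := h1.mul (isBigO_refl (fun k => (w k)⁻¹) atTop)
    refine (h2.congr_left (fun k => by simp [div_eq_mul_inv])).congr_right (fun k => ?_)
    have h3 : (((2 : ℝ) ^ (-ε)) ^ k) = ((2 ^ k : ℕ) : ℝ) ^ (-ε) := by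
      push_cast
      rw [← Real.rpow_natCast, ← Real.rpow_natCast, ← Real.rpow_mul (by norm_num),
        ← Real.rpow_mul (by norm_num), mul_comm]
    rw [h3, hw]
    simp only [Function.comp]
    rw [← Real.rpow_neg (hpos k).le, ← Real.rpow_add (hpos k)]
    congr 1
    ring
  have hint : ∀ k, Integrable (fun x => f (2 ^ k) x / w k) μ := fun k => (hf_int _).div_const _
  have hmeas : ∀ k, AEMeasurable (fun x => ENNReal.ofReal (f (2 ^ k) x / w k)) μ :=
    fun k => (hint k).aemeasurable.ennreal_ofReal
  have hlt : ∫⁻ x, ∑' k, ENNReal.ofReal (f (2 ^ k) x / w k) ∂μ ≠ ⊤ := by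
    rw [lintegral_tsum hmeas]
    have : ∀ k, ∫⁻ x, ENNReal.ofReal (f (2 ^ k) x / w k) ∂μ = ENNReal.ofReal (F (2 ^ k) / w k) := by
      intro k
      rw [← ofReal_integral_eq_lintegral_ofReal (hint k)
        (Eventually.of_forall fun x => div_nonneg (hf_nonneg _ x) (hwpos k).le),
        integral_div, hF]
    simp_rw [this]
    exact hsum.tsum_ofReal_ne_top
  filter_upwards [ae_lt_top' (AEMeasurable.tsum hmeas) hlt] with x hx
  set S := ∑' k, ENNReal.ofReal (f (2 ^ k) x / w k) with hS
  have hb : ∀ k, f (2 ^ k) x ≤ S.toReal * w k := by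
    intro k
    have h := ENNReal.le_tsum (f := fun k => ENNReal.ofReal (f (2 ^ k) x / w k)) k
    have h' := (ENNReal.ofReal_le_iff_le_toReal hx.ne).1 h
    exact (div_le_iff₀ (hwpos k)).1 h'
  refine IsBigO.of_bound (S.toReal * 2 ^ (p + ε)) ?_
  filter_upwards [eventually_ge_atTop 1] with n hn
  have hn0 : (0 : ℝ) ≤ n := Nat.cast_nonneg n
  rw [Real.norm_of_nonneg (hf_nonneg n x), Real.norm_of_nonneg (Real.rpow_nonneg hn0 _),
    mul_assoc, ← Real.mul_rpow (by norm_num) hn0]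
  have h1 : n ≤ 2 ^ (Nat.log 2 n + 1) := (Nat.lt_pow_succ_log_self (by norm_num) n).le
  have h2 : 2 ^ (Nat.log 2 n) ≤ n := Nat.pow_log_le_self 2 (by omega)
  refine (hf_mono x h1).trans ((hb _).trans ?_)
  refine mul_le_mul_of_nonneg_left ?_ ENNReal.toReal_nonneg
  refine Real.rpow_le_rpow (hpos _).le ?_ (by linarith)
  have : 2 ^ (Nat.log 2 n + 1) ≤ 2 * n := by rw [pow_succ]; omega
  exact_mod_cast this
end

section
/- Let (X, μ) be a finite measure space and, for each n ∈ ℕ, let f(·;n) : X → [0,∞) be an integrable function such that for every x ∈ X the numerical sequence n ↦ f(x;n) is nondecreasing; set F(n) = ∫_X f(x;n) dμ(x). Let a > 0 and suppose F(n) = O(e^{an}) as n → ∞. Then for every ε > 0 and μ-almost every x ∈ X one has f(x;n) = O(e^{(a+ε)n}) as n → ∞. -/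
open MeasureTheory Filter Asymptotics

/-- Discrete-time version: if the averages satisfy `F(n) = O(e^(a n))` with `a > 0` and the
sequences `n ↦ f(x;n)` are nondecreasing, then for every `ε > 0` and almost every `x` one has
`f(x;n) = O(e^((a+ε) n))` as `n → ∞`. -/
theorem exp_bound_disc {X : Type*} [MeasurableSpace X] (μ : Measure X) [IsFiniteMeasure μ]
    (f : ℕ → X → ℝ) (F : ℕ → ℝ)
    (hf_nonneg : ∀ n : ℕ, ∀ x : X, 0 ≤ f n x)
    (hf_int : ∀ n : ℕ, Integrable (f n) μ)
    (hF : ∀ n : ℕ, F n = ∫ x, f n x ∂μ)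
    (hf_mono : ∀ x : X, Monotone fun n : ℕ => f n x)
    (a : ℝ) (ha : 0 < a) (hF_O : F =O[atTop] fun n : ℕ => Real.exp (a * n)) :
    ∀ ε : ℝ, 0 < ε →
      ∀ᵐ x ∂μ, (fun n : ℕ => f n x) =O[atTop] fun n : ℕ => Real.exp ((a + ε) * n) := by
  intro ε hε
  have hsum : Summable fun n : ℕ => F n * Real.exp (-((a + ε) * n)) := by
    have h1 : Summable fun n : ℕ => Real.exp (n * (-ε)) :=
      Real.summable_exp_nat_mul_iff.2 (by linarith)
    refine summable_of_isBigO_nat h1 ?_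
    refine (hF_O.mul (isBigO_refl (fun n : ℕ => Real.exp (-((a + ε) * n))) atTop)).congr_right ?_
    intro n
    rw [← Real.exp_add]
    congr 1
    ring
  have hfin : ∫⁻ x, ∑' n : ℕ, ENNReal.ofReal (f n x * Real.exp (-((a + ε) * n))) ∂μ ≠ ⊤ := by
    rw [lintegral_tsum fun n =>
      ((hf_int n).mul_const (Real.exp (-((a + ε) * n)))).aestronglyMeasurable.aemeasurable.ennreal_ofReal]
    have h2 : ∀ n : ℕ, ∫⁻ x, ENNReal.ofReal (f n x * Real.exp (-((a + ε) * n))) ∂μ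
        = ENNReal.ofReal (F n * Real.exp (-((a + ε) * n))) := by
      intro n
      rw [← ofReal_integral_eq_lintegral_ofReal ((hf_int n).mul_const _)
        (Eventually.of_forall fun x => mul_nonneg (hf_nonneg n x) (Real.exp_pos _).le),
        integral_mul_const, hF]
    simp_rw [h2]
    exact hsum.tsum_ofReal_ne_top
  have hae := ae_lt_top' (AEMeasurable.ennreal_tsum fun n =>
      ((hf_int n).mul_const (Real.exp (-((a + ε) * n)))).aestronglyMeasurable.aemeasurable.ennreal_ofReal) hfin
  filter_upwards [hae] with x hx
  refine IsBigO.of_bound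
    (∑' n : ℕ, ENNReal.ofReal (f n x * Real.exp (-((a + ε) * n)))).toReal
    (Eventually.of_forall fun n => ?_)
  have h3 := ENNReal.le_tsum
    (f := fun n : ℕ => ENNReal.ofReal (f n x * Real.exp (-((a + ε) * n)))) n
  have h4 := (ENNReal.ofReal_le_iff_le_toReal hx.ne).1 h3
  rw [Real.norm_of_nonneg (hf_nonneg n x), Real.norm_of_nonneg (Real.exp_pos _).le]
  rw [Real.exp_neg, ← div_eq_mul_inv, div_le_iff₀ (Real.exp_pos _)] at h4
  exact h4
end

section
/- Let (X, μ) be a finite measure space and, for each t ∈ [0,∞), let f(·;t) : X → [0,∞) be an integrable function; set F(t) = ∫_X f(x;t) dμ(x). Assume that for every x ∈ X the function t ↦ f(x;t) is nondecreasing, and that F(t) → ∞ as t → ∞. Let p > 0 and suppose F(t) = O(t^p) as t → ∞. Then for every ε > 0 and μ-almost every x ∈ X one has the little-o bound f(x;t) = o(t^{p+ε}) as t → ∞. -/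
open MeasureTheory Filter Asymptotics

/-- Little-o version: if the averages satisfy `F(t) = O(t^p)` with `p > 0`, the functions are
nondecreasing in time and `F(t) → ∞`, then for every `ε > 0` and almost every `x` one has
`f(x;t) = o(t^(p+ε))` as `t → ∞`. -/
theorem power_bound_littleo_cont {X : Type*} [MeasurableSpace X] (μ : Measure X)
    [IsFiniteMeasure μ]
    (f : ℝ → X → ℝ) (F : ℝ → ℝ)
    (hf_nonneg : ∀ t : ℝ, 0 ≤ t → ∀ x : X, 0 ≤ f t x)
    (hf_int : ∀ t : ℝ, 0 ≤ t → Integrable (f t) μ)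
    (hF : ∀ t : ℝ, 0 ≤ t → F t = ∫ x, f t x ∂μ)
    (hf_mono : ∀ x : X, ∀ s t : ℝ, 0 ≤ s → s ≤ t → f s x ≤ f t x)
    (hF_top : Tendsto F atTop atTop)
    (p : ℝ) (hp : 0 < p) (hF_O : F =O[atTop] fun t : ℝ => t ^ p) :
    ∀ ε : ℝ, 0 < ε →
      ∀ᵐ x ∂μ, (fun t : ℝ => f t x) =o[atTop] fun t : ℝ => t ^ (p + ε) := by
  intro ε hε
  set q : ℝ := p + ε with hq
  have hq0 : 0 < q := by positivity
  have h2n : ∀ n : ℕ, (0 : ℝ) < 2 ^ n := fun n => by positivity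
  let g : ℕ → X → ℝ := fun n x => f (2 ^ n) x / ((2 : ℝ) ^ n) ^ q
  have hg0 : ∀ n x, 0 ≤ g n x := fun n x =>
    div_nonneg (hf_nonneg _ (h2n n).le x) (Real.rpow_nonneg (h2n n).le _)
  have hgi : ∀ n, Integrable (g n) μ := fun n => (hf_int _ (h2n n).le).div_const _
  have hgI : ∀ n, ∫ x, g n x ∂μ = F (2 ^ n) / ((2 : ℝ) ^ n) ^ q := fun n => by
    rw [hF _ (h2n n).le]
    exact integral_div _ _
  have hr1 : (2 : ℝ) ^ (-ε) < 1 := Real.rpow_lt_one_of_one_lt_of_neg (by norm_num) (by linarith)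
  have hr0 : 0 ≤ (2 : ℝ) ^ (-ε) := by positivity
  have htend : Tendsto (fun n : ℕ => (2 : ℝ) ^ n) atTop atTop :=
    tendsto_pow_atTop_atTop_of_one_lt (by norm_num)
  have hsum : Summable (fun n => ∫ x, g n x ∂μ) := by
    refine summable_of_isBigO_nat (summable_geometric_of_lt_one hr0 hr1) ?_
    have h1 := (hF_O.comp_tendsto htend).mul
      (isBigO_refl (fun n : ℕ => (((2 : ℝ) ^ n) ^ q)⁻¹) atTop)
    refine (h1.congr_left ?_).congr_right ?_
    · intro n
      rw [hgI n, div_eq_mul_inv]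
      rfl
    · intro n
      change ((2 : ℝ) ^ n) ^ p * (((2 : ℝ) ^ n) ^ q)⁻¹ = ((2 : ℝ) ^ (-ε)) ^ n
      rw [← Real.rpow_neg (h2n n).le, ← Real.rpow_add (h2n n), ← Real.rpow_natCast,
        ← Real.rpow_natCast, ← Real.rpow_mul (by norm_num), ← Real.rpow_mul (by norm_num)]
      congr 1
      rw [hq]
      ring
  have hmeas : ∀ n, AEMeasurable (fun x => ENNReal.ofReal (g n x)) μ :=
    fun n => (hgi n).aemeasurable.ennreal_ofReal
  have hfin : ∫⁻ x, ∑' n, ENNReal.ofReal (g n x) ∂μ ≠ ⊤ := by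
    rw [lintegral_tsum hmeas]
    have : ∀ n, ∫⁻ x, ENNReal.ofReal (g n x) ∂μ = ENNReal.ofReal (∫ x, g n x ∂μ) := fun n =>
      (ofReal_integral_eq_lintegral_ofReal (hgi n) (Eventually.of_forall (hg0 n))).symm
    simp_rw [this]
    exact hsum.tsum_ofReal_ne_top
  filter_upwards [ae_lt_top' (AEMeasurable.ennreal_tsum hmeas) hfin] with x hx
  have ht0 : Tendsto (fun n => g n x) atTop (nhds 0) := by
    have h := ENNReal.tendsto_atTop_zero_of_tsum_ne_top hx.ne
    have h' := (ENNReal.tendsto_toReal ENNReal.zero_ne_top).comp h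
    simpa [Function.comp_def, ENNReal.toReal_ofReal (hg0 _ x)] using h'
  rw [isLittleO_iff]
  intro c hc
  have hcq : 0 < c / 2 ^ q := by positivity
  obtain ⟨N, hN⟩ := eventually_atTop.1 (ht0.eventually_lt_const hcq)
  filter_upwards [eventually_ge_atTop (1 : ℝ), eventually_ge_atTop ((2 : ℝ) ^ N)] with t h1 hNt
  obtain ⟨n, hn1, hn2⟩ := exists_nat_pow_near h1 (by norm_num : (1 : ℝ) < 2)
  have hNn : N ≤ n + 1 :=
    ((pow_lt_pow_iff_right₀ (by norm_num : (1 : ℝ) < 2)).1 (hNt.trans_lt hn2)).le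
  have h3 := hN _ hNn
  have ht : 0 ≤ t := by linarith
  rw [Real.norm_of_nonneg (hf_nonneg t ht x), Real.norm_of_nonneg (Real.rpow_nonneg ht _)]
  have hpos : 0 < ((2 : ℝ) ^ (n + 1)) ^ q := Real.rpow_pos_of_pos (h2n _) _
  have h4 : f (2 ^ (n + 1)) x ≤ c / 2 ^ q * ((2 : ℝ) ^ (n + 1)) ^ q :=
    ((div_lt_iff₀ hpos).1 h3).le
  have h5 : ((2 : ℝ) ^ (n + 1)) ^ q ≤ t ^ q * 2 ^ q := by
    rw [← Real.mul_rpow ht (by norm_num)]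
    refine Real.rpow_le_rpow (h2n _).le ?_ hq0.le
    rw [pow_succ]
    linarith
  calc f t x ≤ f (2 ^ (n + 1)) x := hf_mono x _ _ ht hn2.le
    _ ≤ _ := h4
    _ ≤ c / 2 ^ q * (t ^ q * 2 ^ q) := by gcongr
    _ = c * t ^ q := by
      have : (2 : ℝ) ^ q ≠ 0 := by positivity
      field_simp
end
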